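/- Let n ≤ m, let M be an n×m complex matrix, and let M′ be the (n+1)×m matrix obtained from M by appending the row X ∈ ℂ^m. Let 1 ≤ k−1 ≤ ℓ < m. Let v_1, …, v_m be an orthonormal basis of ℂ^m consisting of eigenvectors of M†M with M†M v_i = σ_i(M)² v_i for each i (where σ_1(M) ≥ … ≥ σ_m(M)), and let P be the orthogonal projection onto the span of v_{ℓ+1}, …, v_m (the m−ℓ smallest right-singular directions of M). Then ∏_{i=k}^{ℓ+1} σ_i(M′) ≥ ‖P X†‖_2 · (‖X‖_2² + σ_{k−1}(M)²)^{−1/2} · ∏_{i=k−1}^{ℓ} σ_i(M). -/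

import Mathlib

open Matrix

/-- The Euclidean norm of a vector in `ℂ^m`. -/
noncomputable def vecNorm2 {m : ℕ} (v : Fin m → ℂ) : ℝ :=
  Real.sqrt (∑ i, ‖v i‖ ^ 2)

/-- The standard Hermitian inner product on `ℂ^m` (conjugate-linear in the first variable). -/
noncomputable def cInner {m : ℕ} (x y : Fin m → ℂ) : ℂ :=
  ∑ j, starRingEnd ℂ (x j) * y j

/-- The `(n+1) × m` matrix obtained from an `n × m` matrix `M` by appending the row `X`. -/
def appendRow {n m : ℕ} (M : Matrix (Fin n) (Fin m) ℂ) (X : Fin m → ℂ) :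
    Matrix (Fin (n + 1)) (Fin m) ℂ :=
  Matrix.of fun i j => if h : (i : ℕ) < n then M ⟨(i : ℕ), h⟩ j else X j

/-!
Let `A` be the operator with rows `β_i v_i†` (`i ≤ ℓ`) and `X`, where
`β_i = min(σ_i, σ_{k-1})`. Its Gram determinant gives
`∏_{i ≤ ℓ+1} σ_i(A) ≥ ‖P X†‖ ∏_{i ≤ ℓ} β_i = ‖P X†‖ σ_{k-1}^{k-2} ∏_{i=k-1}^{ℓ} σ_i(M)`.
By Courant–Fischer, `σ_1(A)² ≤ ‖X‖² + σ_{k-1}²`, while `σ_i(A) ≤ σ_{k-1}` for `2 ≤ i ≤ k-1`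
(restrict to `(X†)ᗮ`), so these `k-1` factors can be divided out of the product. The remaining
factors satisfy `σ_i(A) ≤ σ_i(M')`, because `‖A z‖ ≤ ‖M' z‖` for all `z`.
-/

open Module
open scoped InnerProductSpace

lemma prod_fin_max_eq {R : Type*} [CommMonoid R] (f : ℕ → R) {j l : ℕ} (hjl : j ≤ l) :
    ∏ i : Fin l, f (max i j) = f j ^ j * ∏ i ∈ Finset.Ico j l, f i := by
  rw [Fin.prod_univ_eq_prod_range (fun i => f (max i j)) l,
    ← Finset.prod_range_mul_prod_Ico _ hjl]
  congr 1
  · rw [Finset.prod_congr rfl fun i hi => by rw [max_eq_right (Finset.mem_range.1 hi).le]]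
    simp
  · exact Finset.prod_congr rfl fun i hi => by rw [max_eq_left (Finset.mem_Ico.1 hi).1]

section SingularValues

variable {𝕜 E F G : Type*} [RCLike 𝕜]
  [NormedAddCommGroup E] [InnerProductSpace 𝕜 E] [FiniteDimensional 𝕜 E]
  [NormedAddCommGroup F] [InnerProductSpace 𝕜 F] [FiniteDimensional 𝕜 F]
  [NormedAddCommGroup G] [InnerProductSpace 𝕜 G] [FiniteDimensional 𝕜 G]

lemma eigenvalues_eq_of_eigenbasis {S : E →ₗ[𝕜] E} (hS : S.IsSymmetric) {m : ℕ}
    (hm : finrank 𝕜 E = m) (b : OrthonormalBasis (Fin m) 𝕜 E) {c : Fin m → ℝ} (hc : Antitone c)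
    (hb : ∀ i, S (b i) = (c i : 𝕜) • b i) : hS.eigenvalues hm = c := by
  have hmatrix : S.toMatrix b.toBasis b.toBasis = diagonal (fun i => (c i : 𝕜)) := by
    ext i j
    rcases eq_or_ne i j with rfl | hij
    · simp [LinearMap.toMatrix_apply, hb, Algebra.smul_def]
    · simp [LinearMap.toMatrix_apply, hb, hij]
  have hroots : S.charpoly.roots.map RCLike.re = List.ofFn c := by
    rw [← S.charpoly_toMatrix b.toBasis, hmatrix, charpoly_diagonal,
      Polynomial.roots_prod _ _ (Finset.prod_ne_zero_iff.2 fun i _ =>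
        Polynomial.X_sub_C_ne_zero _)]
    simp [Fin.univ_val_map, Function.comp_def]
  rw [← List.ofFn_inj, ← hS.sort_roots_charpoly_eq_eigenvalues hm, hroots, Multiset.coe_sort]
  exact List.mergeSort_of_pairwise (by simpa using hc.sortedGE_ofFn.pairwise)

lemma sq_singularValues_eq_of_eigenbasis (T : E →ₗ[𝕜] F) {m : ℕ}
    (b : OrthonormalBasis (Fin m) 𝕜 E) {c : Fin m → ℝ} (hc : Antitone c)
    (hb : ∀ i, T.adjoint (T (b i)) = (c i : 𝕜) • b i) (i : Fin m) :
    T.singularValues i ^ 2 = c i := by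
  have hm : finrank 𝕜 E = m := by simpa using finrank_eq_card_basis b.toBasis
  rw [T.sq_singularValues_fin hm,
    eigenvalues_eq_of_eigenbasis T.isSymmetric_adjoint_comp_self hm b hc hb]

lemma norm_sq_apply_eq_sum_of_eigenbasis (T : E →ₗ[𝕜] F) {ι : Type*} [Fintype ι]
    (b : OrthonormalBasis ι 𝕜 E) {c : ι → ℝ} (hb : ∀ i, T.adjoint (T (b i)) = (c i : 𝕜) • b i)
    (z : E) : ‖T z‖ ^ 2 = ∑ i, c i * ‖⟪b i, z⟫_𝕜‖ ^ 2 := by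
  have hcoord (i : ι) : ⟪b i, T.adjoint (T z)⟫_𝕜 = c i * ⟪b i, z⟫_𝕜 := by
    rw [LinearMap.adjoint_inner_right, ← LinearMap.adjoint_inner_left, hb, inner_smul_left,
      RCLike.conj_ofReal]
  rw [← RCLike.ofReal_inj (K := 𝕜)]
  push_cast
  rw [← inner_self_eq_norm_sq_to_K (𝕜 := 𝕜), ← LinearMap.adjoint_inner_right,
    ← b.sum_inner_mul_inner]
  refine Finset.sum_congr rfl fun i _ => ?_
  rw [hcoord, ← inner_conj_symm z, mul_left_comm, RCLike.conj_mul]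

lemma exists_singular_basis (T : E →ₗ[𝕜] F) :
    ∃ b : OrthonormalBasis (Fin (finrank 𝕜 E)) 𝕜 E,
      ∀ z, ‖T z‖ ^ 2 =
        ∑ i : Fin (finrank 𝕜 E), T.singularValues i ^ 2 * ‖⟪b i, z⟫_𝕜‖ ^ 2 :=
  ⟨T.isSymmetric_adjoint_comp_self.eigenvectorBasis rfl,
    norm_sq_apply_eq_sum_of_eigenbasis T (ι := Fin _) _ (c := (T.singularValues · ^ 2)) fun i => by
      rw [T.sq_singularValues_fin rfl]
      exact T.isSymmetric_adjoint_comp_self.apply_eigenvectorBasis rfl i⟩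

lemma exists_submodule_forall_inner_eq_zero {ι : Type*} (w : ι → E) (s : Finset ι) :
    ∃ V : Submodule 𝕜 E, finrank 𝕜 E ≤ s.card + finrank 𝕜 V ∧
      ∀ z ∈ V, ∀ i ∈ s, ⟪w i, z⟫_𝕜 = 0 := by
  classical
  refine ⟨(Submodule.span 𝕜 (s.image w : Set E))ᗮ, ?_, fun z hz i hi =>
    Submodule.inner_right_of_mem_orthogonal
      (Submodule.subset_span (Finset.mem_image_of_mem w hi)) hz⟩
  rw [← (Submodule.span 𝕜 (s.image w : Set E)).finrank_add_finrank_orthogonal]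
  gcongr
  exact (finrank_span_finset_le_card _).trans Finset.card_image_le

lemma exists_ne_zero_mem_of_finrank_lt {V W : Submodule 𝕜 E}
    (h : finrank 𝕜 E < finrank 𝕜 V + finrank 𝕜 W) : ∃ z ∈ V, z ∈ W ∧ z ≠ 0 := by
  by_contra! hVW
  exact h.not_ge (Submodule.finrank_add_finrank_le_of_disjoint (Submodule.disjoint_def.2 hVW))

lemma exists_submodule_singularValues_mul_norm_le (T : E →ₗ[𝕜] F) {i : ℕ}
    (hi : i < finrank 𝕜 E) :
    ∃ V : Submodule 𝕜 E, i < finrank 𝕜 V ∧ ∀ z ∈ V, T.singularValues i * ‖z‖ ≤ ‖T z‖ := by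
  obtain ⟨b, hb⟩ := exists_singular_basis T
  obtain ⟨V, hV, hbV⟩ := exists_submodule_forall_inner_eq_zero (𝕜 := 𝕜) b (Finset.Ioi ⟨i, hi⟩)
  refine ⟨V, by simp only [Fin.card_Ioi] at hV; omega, fun z hz => ?_⟩
  refine le_of_sq_le_sq ?_ (norm_nonneg _)
  rw [mul_pow, hb, ← b.sum_sq_norm_inner_right, Finset.mul_sum]
  refine Finset.sum_le_sum fun j _ => ?_
  rcases le_or_gt j ⟨i, hi⟩ with hj | hj
  · gcongr
    · exact T.singularValues_nonneg _
    · exact T.singularValues_antitone hj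
  · simp [hbV z hz j (Finset.mem_Ioi.2 hj)]

lemma exists_submodule_norm_le_singularValues_mul (T : E →ₗ[𝕜] F) (i : ℕ) :
    ∃ V : Submodule 𝕜 E, finrank 𝕜 E ≤ i + finrank 𝕜 V ∧
      ∀ z ∈ V, ‖T z‖ ≤ T.singularValues i * ‖z‖ := by
  obtain ⟨b, hb⟩ := exists_singular_basis T
  obtain ⟨V, hV, hbV⟩ := exists_submodule_forall_inner_eq_zero (𝕜 := 𝕜) b {j | (j : ℕ) < i}
  refine ⟨V, by rw [Fin.card_filter_val_lt] at hV; omega, fun z hz => ?_⟩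
  refine le_of_sq_le_sq ?_ (mul_nonneg (T.singularValues_nonneg i) (norm_nonneg z))
  rw [mul_pow, hb, ← b.sum_sq_norm_inner_right, Finset.mul_sum]
  refine Finset.sum_le_sum fun j _ => ?_
  rcases lt_or_ge (j : ℕ) i with hj | hj
  · simp [hbV z hz j (by simpa using hj)]
  · gcongr
    · exact T.singularValues_nonneg _
    · exact T.singularValues_antitone hj

lemma le_singularValues_of_forall_mem (T : E →ₗ[𝕜] F) {i : ℕ} {V : Submodule 𝕜 E}
    (hV : i < finrank 𝕜 V) {r : ℝ} (hr : ∀ z ∈ V, r * ‖z‖ ≤ ‖T z‖) :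
    r ≤ T.singularValues i := by
  obtain ⟨W, hW, hTW⟩ := exists_submodule_norm_le_singularValues_mul T i
  obtain ⟨z, hzV, hzW, hz⟩ :=
    exists_ne_zero_mem_of_finrank_lt (show finrank 𝕜 E < finrank 𝕜 V + finrank 𝕜 W by omega)
  exact le_of_mul_le_mul_right ((hr z hzV).trans (hTW z hzW)) (norm_pos_iff.2 hz)

lemma singularValues_le_of_forall_mem (T : E →ₗ[𝕜] F) {i : ℕ} {V : Submodule 𝕜 E}
    (hV : finrank 𝕜 E ≤ i + finrank 𝕜 V) {r : ℝ} (hr0 : 0 ≤ r) (hr : ∀ z ∈ V, ‖T z‖ ≤ r * ‖z‖) :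
    T.singularValues i ≤ r := by
  rcases le_or_gt (finrank 𝕜 E) i with hi | hi
  · rwa [T.singularValues_of_finrank_le hi]
  obtain ⟨W, hW, hTW⟩ := exists_submodule_singularValues_mul_norm_le T hi
  obtain ⟨z, hzV, hzW, hz⟩ :=
    exists_ne_zero_mem_of_finrank_lt (show finrank 𝕜 E < finrank 𝕜 V + finrank 𝕜 W by omega)
  exact le_of_mul_le_mul_right ((hTW z hzW).trans (hr z hzV)) (norm_pos_iff.2 hz)

lemma singularValues_le_of_norm_le {A : E →ₗ[𝕜] F} {B : E →ₗ[𝕜] G} (h : ∀ z, ‖A z‖ ≤ ‖B z‖)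
    (i : ℕ) : A.singularValues i ≤ B.singularValues i := by
  rcases le_or_gt (finrank 𝕜 E) i with hi | hi
  · rw [A.singularValues_of_finrank_le hi, B.singularValues_of_finrank_le hi]
  obtain ⟨V, hV, hAV⟩ := exists_submodule_singularValues_mul_norm_le A hi
  exact le_singularValues_of_forall_mem B hV fun z hz => (hAV z hz).trans (h z)

lemma mul_norm_apply_le_norm_adjoint_apply (T : E →ₗ[𝕜] F) {r : ℝ} {z : E}
    (hz : r * ‖z‖ ≤ ‖T z‖) : r * ‖T z‖ ≤ ‖T.adjoint (T z)‖ := by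
  rcases eq_or_ne z 0 with rfl | hz0
  · simp
  refine le_of_mul_le_mul_right ?_ (norm_pos_iff.2 hz0)
  calc r * ‖T z‖ * ‖z‖ = r * ‖z‖ * ‖T z‖ := mul_right_comm ..
    _ ≤ ‖T z‖ * ‖T z‖ := by gcongr
    _ = RCLike.re ⟪T.adjoint (T z), z⟫_𝕜 := by
      rw [LinearMap.adjoint_inner_left, inner_self_eq_norm_mul_norm]
    _ ≤ ‖T.adjoint (T z)‖ * ‖z‖ := re_inner_le_norm _ _

lemma singularValues_le_singularValues_adjoint (T : E →ₗ[𝕜] F) (i : ℕ) :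
    T.singularValues i ≤ T.adjoint.singularValues i := by
  rcases (T.singularValues_nonneg i).eq_or_lt with h0 | hpos
  · rw [← h0]
    exact T.adjoint.singularValues_nonneg i
  have hi : i < finrank 𝕜 E := by
    by_contra! hi
    exact hpos.ne' (T.singularValues_of_finrank_le hi)
  obtain ⟨V, hV, hTV⟩ := exists_submodule_singularValues_mul_norm_le T hi
  have hdisjoint : Disjoint V T.ker := Submodule.disjoint_def.2 fun z hzV hz => by
    have hle := hTV z hzV
    rw [LinearMap.mem_ker.1 hz, norm_zero] at hle
    exact norm_le_zero_iff.1 (nonpos_of_mul_nonpos_right hle hpos)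
  refine le_singularValues_of_forall_mem (V := V.map T) T.adjoint ?_ ?_
  · rwa [← LinearMap.range_domRestrict, LinearMap.finrank_range_of_inj
      (LinearMap.injective_domRestrict_iff.2 hdisjoint)]
  · rintro _ ⟨z, hz, rfl⟩
    exact mul_norm_apply_le_norm_adjoint_apply T (hTV z hz)

end SingularValues

section Gram

variable {𝕜 E ι : Type*} [RCLike 𝕜] [NormedAddCommGroup E] [InnerProductSpace 𝕜 E]

variable (𝕜) in
/-- The analysis operator `z ↦ (⟪w i, z⟫)ᵢ` of a finite family of vectors, whose singular values
are the square roots of the eigenvalues of the frame operator `∑ᵢ w i ⊗ (w i)†`. -/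
noncomputable def analysisOperator (w : ι → E) : E →ₗ[𝕜] EuclideanSpace 𝕜 ι :=
  (WithLp.linearEquiv 2 𝕜 (ι → 𝕜)).symm.toLinearMap ∘ₗ LinearMap.pi fun i => innerₛₗ 𝕜 (w i)

lemma analysisOperator_apply (w : ι → E) (z : E) (i : ι) :
    analysisOperator 𝕜 w z i = ⟪w i, z⟫_𝕜 := rfl

variable [Fintype ι]

lemma norm_sq_analysisOperator_apply (w : ι → E) (z : E) :
    ‖analysisOperator 𝕜 w z‖ ^ 2 = ∑ i, ‖⟪w i, z⟫_𝕜‖ ^ 2 := by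
  simp only [EuclideanSpace.norm_sq_eq, analysisOperator_apply]

lemma analysisOperator_adjoint_single [DecidableEq ι] [FiniteDimensional 𝕜 E] (w : ι → E)
    (i : ι) : (analysisOperator 𝕜 w).adjoint (EuclideanSpace.single i 1) = w i := by
  refine ext_inner_right 𝕜 fun z => ?_
  rw [LinearMap.adjoint_inner_left, EuclideanSpace.inner_single_left, analysisOperator_apply,
    map_one, one_mul]

lemma re_det_gram_le_sq_prod_singularValues [DecidableEq ι] [FiniteDimensional 𝕜 E]
    (w : ι → E) : RCLike.re (gram 𝕜 w).det ≤
      (∏ i ∈ Finset.range (Fintype.card ι), (analysisOperator 𝕜 w).singularValues i) ^ 2 := by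
  set A := analysisOperator 𝕜 w with hA
  have hgram : (A.adjoint.normDet ^ 2 : ℝ) = (gram 𝕜 w).det := by
    simpa [hA, analysisOperator_adjoint_single] using
      A.adjoint.normDet_sq_eq_det_gram (EuclideanSpace.basisFun ι 𝕜)
  have hadjoint (i : ℕ) : A.adjoint.singularValues i ≤ A.singularValues i := by
    simpa using singularValues_le_singularValues_adjoint A.adjoint i
  rw [← hgram, RCLike.ofReal_re, A.adjoint.normDet_eq_prod_singularValues, finrank_euclideanSpace]
  gcongr with i
  · exact Finset.prod_nonneg fun i _ => A.adjoint.singularValues_nonneg i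
  · exact fun i _ => A.adjoint.singularValues_nonneg i
  · exact hadjoint i

lemma det_gram_smul [DecidableEq ι] (c : ι → ℝ) (w : ι → E) :
    (gram 𝕜 fun i => (c i : 𝕜) • w i).det = ((∏ i, c i) ^ 2 : ℝ) * (gram 𝕜 w).det := by
  have hscale : gram 𝕜 (fun i => (c i : 𝕜) • w i) =
      diagonal (fun i => (c i : 𝕜)) * gram 𝕜 w * diagonal (fun i => (c i : 𝕜)) := by
    ext i j
    simp [gram_apply, inner_smul_left, inner_smul_right, mul_comm, mul_left_comm]
  rw [hscale, det_mul, det_mul, det_diagonal]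
  push_cast
  ring

lemma norm_sub_sum_inner_smul_sq {v : ι → E} (hv : Orthonormal 𝕜 v) (x : E) :
    (‖x - ∑ i, ⟪v i, x⟫_𝕜 • v i‖ ^ 2 : 𝕜) = ⟪x, x⟫_𝕜 - ∑ i, ⟪x, v i⟫_𝕜 * ⟪v i, x⟫_𝕜 := by
  set y := x - ∑ i, ⟪v i, x⟫_𝕜 • v i with hy
  have horthogonal (i : ι) : ⟪y, v i⟫_𝕜 = 0 := by
    rw [hy, inner_sub_left, hv.inner_left_fintype, inner_conj_symm, sub_self]
  calc (‖y‖ ^ 2 : 𝕜) = ⟪y, x⟫_𝕜 - ∑ i, ⟪v i, x⟫_𝕜 * ⟪y, v i⟫_𝕜 := by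
        rw [← inner_self_eq_norm_sq_to_K]
        nth_rw 2 [hy]
        simp only [inner_sub_right, inner_sum, inner_smul_right]
    _ = ⟪y, x⟫_𝕜 := by simp only [horthogonal, mul_zero, Finset.sum_const_zero, sub_zero]
    _ = _ := by simp only [hy, inner_sub_left, sum_inner, inner_smul_left, inner_conj_symm]

lemma det_gram_sumElim_of_orthonormal [DecidableEq ι] {v : ι → E} (hv : Orthonormal 𝕜 v) (x : E) :
    (gram 𝕜 (Sum.elim v fun _ : Unit => x)).det = (‖x - ∑ i, ⟪v i, x⟫_𝕜 • v i‖ ^ 2 : 𝕜) := by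
  have hblocks : gram 𝕜 (Sum.elim v fun _ : Unit => x) =
      fromBlocks 1 (of fun i _ => ⟪v i, x⟫_𝕜) (of fun _ i => ⟪x, v i⟫_𝕜)
        (of fun _ _ => ⟪x, x⟫_𝕜) := by
    ext (i | i) (j | j) <;> simp [gram_apply, one_apply, orthonormal_iff_ite.1 hv]
  rw [hblocks, det_fromBlocks_one₁₁, det_unique, norm_sub_sum_inner_smul_sq hv]
  rfl

end Gram

section BorderedOperator

variable {𝕜 E F ι : Type*} [RCLike 𝕜] [Fintype ι]
  [NormedAddCommGroup E] [InnerProductSpace 𝕜 E]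
  [NormedAddCommGroup F] [InnerProductSpace 𝕜 F] [FiniteDimensional 𝕜 F]

variable (𝕜) in
/-- The operator whose rows are the vectors `β i • v i` followed by `x`. For orthonormal `v` it
models the matrix with singular values `β` and right singular vectors `v`, with `x` appended. -/
noncomputable def borderedOperator (β : ι → ℝ) (v : ι → E) (x : E) :
    E →ₗ[𝕜] EuclideanSpace 𝕜 (ι ⊕ Unit) :=
  analysisOperator 𝕜 (Sum.elim (fun i => (β i : 𝕜) • v i) fun _ => x)

lemma norm_sq_borderedOperator_apply (β : ι → ℝ) (v : ι → E) (x z : E) :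
    ‖borderedOperator 𝕜 β v x z‖ ^ 2 = ∑ i, β i ^ 2 * ‖⟪v i, z⟫_𝕜‖ ^ 2 + ‖⟪x, z⟫_𝕜‖ ^ 2 := by
  simp [borderedOperator, norm_sq_analysisOperator_apply, inner_smul_left, mul_pow]

lemma norm_sq_borderedOperator_apply_le {β : ι → ℝ} {v : ι → E} (hv : Orthonormal 𝕜 v) {b : ℝ}
    (hβ : ∀ i, |β i| ≤ b) (x z : E) :
    ‖borderedOperator 𝕜 β v x z‖ ^ 2 ≤ b ^ 2 * ‖z‖ ^ 2 + ‖⟪x, z⟫_𝕜‖ ^ 2 := by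
  rw [norm_sq_borderedOperator_apply]
  gcongr
  calc ∑ i, β i ^ 2 * ‖⟪v i, z⟫_𝕜‖ ^ 2 ≤ b ^ 2 * ∑ i, ‖⟪v i, z⟫_𝕜‖ ^ 2 := by
        rw [Finset.mul_sum]
        gcongr ∑ i, ?_ * _ with i
        exact sq_le_sq.2 ((hβ i).trans (le_abs_self b))
    _ ≤ b ^ 2 * ‖z‖ ^ 2 := by
        gcongr
        exact hv.sum_inner_products_le z

variable [FiniteDimensional 𝕜 E]

lemma singularValues_zero_borderedOperator_le {β : ι → ℝ} {v : ι → E} (hv : Orthonormal 𝕜 v)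
    {b : ℝ} (hβ : ∀ i, |β i| ≤ b) (x : E) :
    (borderedOperator 𝕜 β v x).singularValues 0 ≤ √(‖x‖ ^ 2 + b ^ 2) := by
  refine singularValues_le_of_forall_mem _ (V := ⊤) (by simp) (Real.sqrt_nonneg _) fun z _ => ?_
  refine le_of_sq_le_sq ((norm_sq_borderedOperator_apply_le hv hβ x z).trans ?_) (by positivity)
  rw [mul_pow, Real.sq_sqrt (by positivity), add_mul, add_comm, ← mul_pow ‖x‖]
  gcongr
  exact norm_inner_le_norm (𝕜 := 𝕜) x z

lemma singularValues_succ_borderedOperator_le {β : ι → ℝ} {v : ι → E} (hv : Orthonormal 𝕜 v)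
    {b : ℝ} (hb : 0 ≤ b) (hβ : ∀ i, |β i| ≤ b) (x : E) (i : ℕ) :
    (borderedOperator 𝕜 β v x).singularValues (i + 1) ≤ b := by
  refine (LinearMap.singularValues_antitone _ (Nat.le_add_left 1 i)).trans ?_
  obtain ⟨V, hV, hxV⟩ :=
    exists_submodule_forall_inner_eq_zero (𝕜 := 𝕜) (fun _ : Unit => x) Finset.univ
  refine singularValues_le_of_forall_mem _ (V := V) (by simpa using hV) hb fun z hz => ?_
  refine le_of_sq_le_sq ((norm_sq_borderedOperator_apply_le hv hβ x z).trans_eq ?_) (by positivity)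
  rw [hxV z hz () (Finset.mem_univ _), norm_zero, mul_pow, zero_pow two_ne_zero, add_zero]

lemma prod_mul_norm_sub_sum_inner_smul_le {v : ι → E} (hv : Orthonormal 𝕜 v) (β : ι → ℝ)
    (x : E) : (∏ i, β i) * ‖x - ∑ i, ⟪v i, x⟫_𝕜 • v i‖ ≤
      ∏ i ∈ Finset.range (Fintype.card ι + 1), (borderedOperator 𝕜 β v x).singularValues i := by
  classical
  have hfamily : Sum.elim (fun i => (β i : 𝕜) • v i) (fun _ : Unit => x) =
      fun i => ((Sum.elim β (fun _ => 1) i : ℝ) : 𝕜) • Sum.elim v (fun _ : Unit => x) i := by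
    ext (i | i) <;> simp
  have hdet : RCLike.re (gram 𝕜 (Sum.elim (fun i => (β i : 𝕜) • v i) fun _ : Unit => x)).det =
      ((∏ i, β i) * ‖x - ∑ i, ⟪v i, x⟫_𝕜 • v i‖) ^ 2 := by
    rw [hfamily, det_gram_smul, det_gram_sumElim_of_orthonormal hv, ← RCLike.ofReal_pow,
      ← RCLike.ofReal_mul, RCLike.ofReal_re, mul_pow, Fintype.prod_sum_type]
    simp only [Sum.elim_inl, Sum.elim_inr, Finset.prod_const_one, mul_one]
  refine le_of_sq_le_sq ?_ (Finset.prod_nonneg fun i _ => LinearMap.singularValues_nonneg _ i)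
  simpa [hdet, borderedOperator] using re_det_gram_le_sq_prod_singularValues (𝕜 := 𝕜)
    (Sum.elim (fun i => (β i : 𝕜) • v i) fun _ : Unit => x)

lemma prod_mul_norm_sub_sum_inner_smul_le_prod_Ico {v : ι → E} (hv : Orthonormal 𝕜 v)
    {β : ι → ℝ} {b : ℝ} (hb : 0 ≤ b) (hβ : ∀ i, |β i| ≤ b) (x : E) {j : ℕ}
    (hj : j ≤ Fintype.card ι) :
    (∏ i, β i) * ‖x - ∑ i, ⟪v i, x⟫_𝕜 • v i‖ ≤ √(‖x‖ ^ 2 + b ^ 2) * b ^ j *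
      ∏ i ∈ Finset.Ico (j + 1) (Fintype.card ι + 1),
        (borderedOperator 𝕜 β v x).singularValues i := by
  set s := (borderedOperator 𝕜 β v x).singularValues
  have hs (i : ℕ) : 0 ≤ s i := LinearMap.singularValues_nonneg _ i
  refine (prod_mul_norm_sub_sum_inner_smul_le hv β x).trans ?_
  rw [← Finset.prod_range_mul_prod_Ico _ (Nat.add_le_add_right hj 1), Finset.prod_range_succ',
    mul_comm _ (s 0)]
  have hmiddle : ∏ i ∈ Finset.range j, s (i + 1) ≤ b ^ j := by
    simpa using Finset.prod_le_prod (s := Finset.range j) (fun i _ => hs (i + 1)) fun i _ =>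
      singularValues_succ_borderedOperator_le hv hb hβ x i
  gcongr
  · exact Finset.prod_nonneg fun i _ => hs i
  · exact Finset.prod_nonneg fun i _ => hs (i + 1)
  · exact singularValues_zero_borderedOperator_le hv hβ x

lemma norm_mul_prod_le_prod_singularValues (T : E →ₗ[𝕜] F) {l : ℕ} {v : Fin l → E}
    (hv : Orthonormal 𝕜 v) (x : E) {σ : ℕ → ℝ} (hσ : Antitone σ) (hσ0 : ∀ i, 0 ≤ σ i)
    (hT : ∀ z, ∑ i : Fin l, σ i ^ 2 * ‖⟪v i, z⟫_𝕜‖ ^ 2 + ‖⟪x, z⟫_𝕜‖ ^ 2 ≤ ‖T z‖ ^ 2)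
    {j : ℕ} (hj : j < l) :
    ‖x - ∑ i, ⟪v i, x⟫_𝕜 • v i‖ * (√(‖x‖ ^ 2 + σ j ^ 2))⁻¹ * ∏ i ∈ Finset.Ico j l, σ i ≤
      ∏ i ∈ Finset.Ico (j + 1) (l + 1), T.singularValues i := by
  rcases (hσ0 j).eq_or_lt with hzero | hpos
  · rw [Finset.prod_eq_zero (Finset.left_mem_Ico.2 hj) hzero.symm, mul_zero]
    exact Finset.prod_nonneg fun i _ => T.singularValues_nonneg i
  -- Lowering `σ 0, …, σ (j - 1)` to `σ j` lets the factor `σ j ^ j` cancel from both sides.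
  set A := borderedOperator 𝕜 (fun i : Fin l => σ (max i j)) v x with hA
  have hAT (z : E) : ‖A z‖ ≤ ‖T z‖ := by
    refine le_of_sq_le_sq (le_trans ?_ (hT z)) (norm_nonneg _)
    rw [hA, norm_sq_borderedOperator_apply]
    gcongr with i
    · exact hσ0 _
    · exact hσ (le_max_left _ _)
  have hβ (i : Fin l) : |σ (max i j)| ≤ σ j := by
    rw [abs_of_nonneg (hσ0 _)]
    exact hσ (le_max_right _ _)
  have hmain := prod_mul_norm_sub_sum_inner_smul_le_prod_Ico hv hpos.le hβ x (j := j)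
    (by simpa using hj.le)
  rw [prod_fin_max_eq σ hj.le, Fintype.card_fin, ← hA] at hmain
  have : 0 < √(‖x‖ ^ 2 + σ j ^ 2) := by positivity
  calc ‖x - ∑ i, ⟪v i, x⟫_𝕜 • v i‖ * (√(‖x‖ ^ 2 + σ j ^ 2))⁻¹ * ∏ i ∈ Finset.Ico j l, σ i
      = (σ j ^ j * ∏ i ∈ Finset.Ico j l, σ i) * ‖x - ∑ i, ⟪v i, x⟫_𝕜 • v i‖ /
          (√(‖x‖ ^ 2 + σ j ^ 2) * σ j ^ j) := by field_simp
    _ ≤ ∏ i ∈ Finset.Ico (j + 1) (l + 1), A.singularValues i := by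
        rwa [div_le_iff₀' (by positivity)]
    _ ≤ ∏ i ∈ Finset.Ico (j + 1) (l + 1), T.singularValues i :=
        Finset.prod_le_prod (fun i _ => A.singularValues_nonneg i)
          fun i _ => singularValues_le_of_norm_le hAT i

end BorderedOperator

section RightSingularSystem

variable {𝕜 E F G : Type*} [RCLike 𝕜]
  [NormedAddCommGroup E] [InnerProductSpace 𝕜 E] [FiniteDimensional 𝕜 E]
  [NormedAddCommGroup F] [InnerProductSpace 𝕜 F] [FiniteDimensional 𝕜 F]
  [NormedAddCommGroup G] [InnerProductSpace 𝕜 G] [FiniteDimensional 𝕜 G]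

/-- `σ 1 ≥ … ≥ σ m` are the singular values of `T` and `v 1, …, v m` is an orthonormal basis of
corresponding right singular vectors. Indices start at `1`; the values of `σ` and `v` outside
`{1, …, m}` are irrelevant. -/
structure IsRightSingularSystem (T : E →ₗ[𝕜] F) (m : ℕ) (σ : ℕ → ℝ) (v : ℕ → E) : Prop where
  finrank_eq : finrank 𝕜 E = m
  nonneg : ∀ i ∈ Finset.Icc 1 m, 0 ≤ σ i
  anti : ∀ i ∈ Finset.Icc 1 m, ∀ j ∈ Finset.Icc 1 m, i ≤ j → σ j ≤ σ i
  inner_eq : ∀ i ∈ Finset.Icc 1 m, ∀ j ∈ Finset.Icc 1 m, ⟪v i, v j⟫_𝕜 = if i = j then 1 else 0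
  adjoint_apply : ∀ i ∈ Finset.Icc 1 m, T.adjoint (T (v i)) = (σ i : 𝕜) ^ 2 • v i

namespace IsRightSingularSystem

variable {T : E →ₗ[𝕜] F} {m : ℕ} {σ : ℕ → ℝ} {v : ℕ → E}

lemma orthonormal (h : IsRightSingularSystem T m σ v) {l : ℕ} (hl : l ≤ m) :
    Orthonormal 𝕜 fun i : Fin l => v (i + 1) := by
  rw [orthonormal_iff_ite]
  intro i j
  rw [h.inner_eq _ (by rw [Finset.mem_Icc]; omega) _ (by rw [Finset.mem_Icc]; omega)]
  simp only [Nat.add_right_cancel_iff, Fin.val_inj]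

lemma exists_orthonormalBasis (h : IsRightSingularSystem T m σ v) :
    ∃ b : OrthonormalBasis (Fin m) 𝕜 E, ∀ i, b i = v (i + 1) := by
  have hv := h.orthonormal le_rfl
  have hspan := hv.linearIndependent.span_eq_top_of_card_eq_finrank' (by simp [h.finrank_eq])
  exact ⟨OrthonormalBasis.mk hv hspan.ge, fun i => by rw [OrthonormalBasis.coe_mk]⟩

lemma singularValues_eq (h : IsRightSingularSystem T m σ v) {i : ℕ} (hi : i < m) :
    T.singularValues i = σ (i + 1) := by
  obtain ⟨b, hb⟩ := h.exists_orthonormalBasis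
  have hmem (i : Fin m) : (i + 1 : ℕ) ∈ Finset.Icc 1 m := by rw [Finset.mem_Icc]; omega
  have hsq := sq_singularValues_eq_of_eigenbasis T b (c := fun i : Fin m => σ (i + 1) ^ 2)
    (fun i j hij => pow_le_pow_left₀ (h.nonneg _ (hmem j))
      (h.anti _ (hmem i) _ (hmem j) (Nat.add_le_add_right hij 1)) 2)
    (fun i => by rw [hb, h.adjoint_apply _ (hmem i), RCLike.ofReal_pow]) ⟨i, hi⟩
  exact (sq_eq_sq₀ (T.singularValues_nonneg i) (h.nonneg _ (hmem ⟨i, hi⟩))).1 hsq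

lemma prod_Ico_singularValues (h : IsRightSingularSystem T m σ v) (j : ℕ) {l : ℕ} (hl : l ≤ m) :
    ∏ i ∈ Finset.Ico j l, T.singularValues i = ∏ i ∈ Finset.Icc (j + 1) l, σ i := by
  rw [← Finset.Ico_add_one_right_eq_Icc, ← Finset.prod_Ico_add' σ]
  exact Finset.prod_congr rfl fun i hi =>
    h.singularValues_eq ((Finset.mem_Ico.1 hi).2.trans_le hl)

lemma norm_sq_apply (h : IsRightSingularSystem T m σ v) (z : E) :
    ‖T z‖ ^ 2 = ∑ i ∈ Finset.range m, T.singularValues i ^ 2 * ‖⟪v (i + 1), z⟫_𝕜‖ ^ 2 := by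
  obtain ⟨b, hb⟩ := h.exists_orthonormalBasis
  rw [norm_sq_apply_eq_sum_of_eigenbasis T b (c := fun i => T.singularValues i ^ 2),
    Finset.sum_range]
  · simp only [hb]
  · intro i
    rw [hb, h.adjoint_apply _ (by rw [Finset.mem_Icc]; omega), h.singularValues_eq i.2,
      RCLike.ofReal_pow]

lemma sum_sq_mul_norm_inner_sq_le (h : IsRightSingularSystem T m σ v) {l : ℕ} (hl : l ≤ m) (z : E) :
    ∑ i : Fin l, T.singularValues i ^ 2 * ‖⟪v (i + 1), z⟫_𝕜‖ ^ 2 ≤ ‖T z‖ ^ 2 := by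
  rw [h.norm_sq_apply,
    Fin.sum_univ_eq_sum_range (fun i => T.singularValues i ^ 2 * ‖⟪v (i + 1), z⟫_𝕜‖ ^ 2)]
  exact Finset.sum_le_sum_of_subset_of_nonneg (Finset.range_mono hl) fun _ _ _ => by positivity

lemma sum_Icc_inner_smul (h : IsRightSingularSystem T m σ v) {l : ℕ} (hl : l ≤ m) (x : E) :
    ∑ i ∈ Finset.Icc (l + 1) m, ⟪v i, x⟫_𝕜 • v i =
      x - ∑ i : Fin l, ⟪v (i + 1), x⟫_𝕜 • v (i + 1) := by
  obtain ⟨b, hb⟩ := h.exists_orthonormalBasis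
  have hx : ∑ i ∈ Finset.range m, ⟪v (i + 1), x⟫_𝕜 • v (i + 1) = x := by
    rw [Finset.sum_range]
    simpa only [hb] using b.sum_repr' x
  rw [← Finset.Ico_add_one_right_eq_Icc, ← Finset.sum_Ico_add' (fun i => ⟪v i, x⟫_𝕜 • v i),
    Finset.sum_Ico_eq_sub _ hl, hx, Finset.sum_range]

end IsRightSingularSystem

theorem singular_value_update_general {T : E →ₗ[𝕜] F} {T' : E →ₗ[𝕜] G} {x : E}
    (hT' : ∀ z, ‖T z‖ ^ 2 + ‖⟪x, z⟫_𝕜‖ ^ 2 ≤ ‖T' z‖ ^ 2) {m : ℕ} {σ σ' : ℕ → ℝ} {v u : ℕ → E}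
    (hσ : IsRightSingularSystem T m σ v) (hσ' : IsRightSingularSystem T' m σ' u)
    {k l : ℕ} (hk : 1 ≤ k - 1) (hkl : k - 1 ≤ l) (hlm : l < m) :
    ‖∑ i ∈ Finset.Icc (l + 1) m, ⟪v i, x⟫_𝕜 • v i‖ * (√(‖x‖ ^ 2 + σ (k - 1) ^ 2))⁻¹ *
      ∏ i ∈ Finset.Icc (k - 1) l, σ i ≤ ∏ i ∈ Finset.Icc k (l + 1), σ' i := by
  obtain ⟨j, rfl⟩ : ∃ j, k = j + 2 := ⟨k - 2, by omega⟩
  have hmain := norm_mul_prod_le_prod_singularValues T' (hσ.orthonormal hlm.le) x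
    T.singularValues_antitone T.singularValues_nonneg
    (fun z => (add_le_add_left (hσ.sum_sq_mul_norm_inner_sq_le hlm.le z) _).trans (hT' z))
    (show j < l by omega)
  rwa [← hσ.sum_Icc_inner_smul hlm.le, hσ.singularValues_eq (by omega),
    hσ.prod_Ico_singularValues j hlm.le, hσ'.prod_Ico_singularValues (j + 1) hlm] at hmain

end RightSingularSystem

section Matrix

lemma inner_toLp {m : ℕ} (x y : Fin m → ℂ) :
    ⟪WithLp.toLp 2 x, WithLp.toLp 2 y⟫_ℂ = cInner x y := by
  simp [cInner, PiLp.inner_apply, mul_comm]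

lemma norm_toLp {m : ℕ} (x : Fin m → ℂ) : ‖WithLp.toLp 2 x‖ = vecNorm2 x := by
  simp [vecNorm2, EuclideanSpace.norm_eq]

lemma vecNorm2_conj {m : ℕ} (x : Fin m → ℂ) :
    vecNorm2 (fun j => starRingEnd ℂ (x j)) = vecNorm2 x := by
  simp only [vecNorm2, RCLike.norm_conj]

lemma isRightSingularSystem_toEuclideanLin {a m : ℕ} {M : Matrix (Fin a) (Fin m) ℂ} {σ : ℕ → ℝ}
    {v : ℕ → Fin m → ℂ} (hσ0 : ∀ i ∈ Finset.Icc 1 m, 0 ≤ σ i)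
    (hσmono : ∀ i ∈ Finset.Icc 1 m, ∀ j ∈ Finset.Icc 1 m, i ≤ j → σ j ≤ σ i)
    (hON : ∀ i ∈ Finset.Icc 1 m, ∀ j ∈ Finset.Icc 1 m,
      cInner (v i) (v j) = if i = j then 1 else 0)
    (heig : ∀ i ∈ Finset.Icc 1 m, (Mᴴ * M).mulVec (v i) = ((σ i : ℂ) ^ 2) • v i) :
    IsRightSingularSystem (toEuclideanLin M) m σ fun i => WithLp.toLp 2 (v i) where
  finrank_eq := finrank_euclideanSpace_fin
  nonneg := hσ0
  anti := hσmono
  inner_eq i hi j hj := by rw [inner_toLp, hON i hi j hj]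
  adjoint_apply i hi := by
    rw [← toEuclideanLin_conjTranspose_eq_adjoint, toLpLin_toLp, toLpLin_toLp, toLin'_apply,
      toLin'_apply, mulVec_mulVec, heig i hi]
    rfl

lemma norm_sq_toEuclideanLin_appendRow {n m : ℕ} (M : Matrix (Fin n) (Fin m) ℂ) (X : Fin m → ℂ)
    (z : EuclideanSpace ℂ (Fin m)) :
    ‖toEuclideanLin (appendRow M X) z‖ ^ 2 = ‖toEuclideanLin M z‖ ^ 2 +
      ‖⟪WithLp.toLp 2 fun j => starRingEnd ℂ (X j), z⟫_ℂ‖ ^ 2 := by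
  simp only [EuclideanSpace.norm_sq_eq, Fin.sum_univ_castSucc, toLpLin_apply]
  congr 1
  · refine Finset.sum_congr rfl fun i _ => ?_
    simp [appendRow, mulVec, dotProduct]
  · simp [appendRow, mulVec, dotProduct, PiLp.inner_apply, mul_comm]

end Matrix

theorem singular_value_update (n m : ℕ) (hnm : n ≤ m)
    (M : Matrix (Fin n) (Fin m) ℂ) (X : Fin m → ℂ)
    (k l : ℕ) (hk : 1 ≤ k - 1) (hkl : k - 1 ≤ l) (hlm : l < m)
    -- the singular values `σ` of `M` together with an orthonormal basis of right-singular
    -- vectors `v` of `M`: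
    (σ : ℕ → ℝ) (v : ℕ → Fin m → ℂ)
    (hσ0 : ∀ i ∈ Finset.Icc 1 m, 0 ≤ σ i)
    (hσmono : ∀ i ∈ Finset.Icc 1 m, ∀ j ∈ Finset.Icc 1 m, i ≤ j → σ j ≤ σ i)
    (hON : ∀ i ∈ Finset.Icc 1 m, ∀ j ∈ Finset.Icc 1 m,
      cInner (v i) (v j) = if i = j then 1 else 0)
    (heig : ∀ i ∈ Finset.Icc 1 m,
      (Mᴴ * M).mulVec (v i) = (((σ i : ℂ)) ^ 2) • v i)
    -- the singular values `σ'` of `M'` (witnessed by an orthonormal eigenbasis `u` of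
    -- `M'ᴴ M'`):
    (σ' : ℕ → ℝ) (u : ℕ → Fin m → ℂ)
    (hσ'0 : ∀ i ∈ Finset.Icc 1 m, 0 ≤ σ' i)
    (hσ'mono : ∀ i ∈ Finset.Icc 1 m, ∀ j ∈ Finset.Icc 1 m, i ≤ j → σ' j ≤ σ' i)
    (hON' : ∀ i ∈ Finset.Icc 1 m, ∀ j ∈ Finset.Icc 1 m,
      cInner (u i) (u j) = if i = j then 1 else 0)
    (heig' : ∀ i ∈ Finset.Icc 1 m,
      ((appendRow M X)ᴴ * appendRow M X).mulVec (u i) = (((σ' i : ℂ)) ^ 2) • u i) :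
    -- `P X†` is the orthogonal projection of `X†` onto the span of the `m - l` smallest
    -- right-singular directions `v_{l+1}, …, v_m` of `M`:
    vecNorm2 (∑ i ∈ Finset.Icc (l + 1) m,
        cInner (v i) (fun j => starRingEnd ℂ (X j)) • v i) *
      (Real.sqrt (vecNorm2 X ^ 2 + σ (k - 1) ^ 2))⁻¹ *
      ∏ i ∈ Finset.Icc (k - 1) l, σ i ≤
    ∏ i ∈ Finset.Icc k (l + 1), σ' i := by
  simpa only [inner_toLp, ← WithLp.toLp_smul, ← WithLp.toLp_sum, norm_toLp, vecNorm2_conj] using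
    singular_value_update_general (fun z => (norm_sq_toEuclideanLin_appendRow M X z).ge)
      (isRightSingularSystem_toEuclideanLin hσ0 hσmono hON heig)
      (isRightSingularSystem_toEuclideanLin hσ'0 hσ'mono hON' heig') hk hkl hlm
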